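/- Let k ≥ 2, let D ⊆ R^k be a β-column set, and let x ∈ R^k be nonzero. If ν(x) = s−1, then ∑_{g∈D} w_Hom(x·g) = q^(sk−1); if ν(x) < s−1 (which forces s ≥ 2), then ∑_{g∈D} w_Hom(x·g) = q^(sk−k−1)·(q^k − 1). -/

import Mathlib

/-- A β-column set: a finite set `D ⊆ R^k` such that every `g ∈ D` has a unit coordinate,
and every vector of `R^k` with a unit coordinate is `u • g` for a unique unit `u` and a
unique `g ∈ D`. -/
def IsBetaColumnSet {R : Type} [CommRing R] {k : ℕ} (D : Finset (Fin k → R)) : Prop :=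
  (∀ g ∈ D, ∃ i, IsUnit (g i)) ∧
  (∀ w : Fin k → R, (∃ i, IsUnit (w i)) →
    ∃! ug : Rˣ × (Fin k → R), ug.2 ∈ D ∧ w = (ug.1 : R) • ug.2)

-- The homogeneous weight on a finite chain ring `R` with maximal ideal `⟨γ⟩`, nilpotency
-- index `s` and residue field of cardinality `q`.
open Classical in
noncomputable def wHom {R : Type} [CommRing R] (γ : R) (s q : ℕ) (y : R) : ℕ :=
  if y = 0 then 0
  else if y ∈ Ideal.span ({γ ^ (s - 1)} : Set R) then q ^ (s - 1)
  else (q - 1) * q ^ (s - 2)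

/-!
Let `𝔪 = ⟨γ⟩` and let the socle be `⟨γ^(s-1)⟩`, an ideal with `q` elements. The homogeneous weight
sums to `|Rˣ| = (q - 1) q^(s-1)` over every coset of the socle, and the image of a nonzero linear
functional contains the socle; so a nonzero functional `f` on a finite module `M` satisfies
`q ∑_{m ∈ M} w(f m) = |M| |Rˣ|`. A column set represents the vectors of `R^k` outside `𝔪^k` up to
units, and the weight is invariant under units, so `|Rˣ| ∑_{g ∈ D} w(f g)` is the sum of `w ∘ f`
over `R^k` minus its sum over `𝔪^k`. The average formula evaluates the first sum, and also the
second one unless `f` vanishes on `𝔪^k`, which happens exactly when `γ • f = 0`.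
-/

/-- `R` is a chain ring with maximal ideal `⟨γ⟩`, nilpotency index `s` and residue field of
cardinality `q`. Since `γ ^ (1 - 1) = 1`, the field `pow_pred_ne_zero` imposes nothing when
`s = 1`. -/
structure IsChainRing (R : Type*) [CommRing R] [IsLocalRing R] (γ : R) (s q : ℕ) : Prop where
  maximalIdeal_eq : IsLocalRing.maximalIdeal R = Ideal.span {γ}
  pow_eq_zero : γ ^ s = 0
  pow_pred_ne_zero : γ ^ (s - 1) ≠ 0
  card_residue : Nat.card (R ⧸ Ideal.span ({γ} : Set R)) = q

namespace IsChainRing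

/-- The ideal `⟨γ^(s-1)⟩`, which is the socle of a chain ring with maximal ideal `⟨γ⟩` and
nilpotency index `s`. -/
abbrev socle {R : Type*} [CommRing R] (γ : R) (s : ℕ) : Ideal R :=
  Ideal.span {γ ^ (s - 1)}

section Ideals

variable {R : Type*} [CommRing R] [IsLocalRing R] {γ : R} {s q : ℕ}

theorem isUnit_iff (h : IsChainRing R γ s q) {y : R} : IsUnit y ↔ ¬γ ∣ y := by
  rw [← Ideal.mem_span_singleton, ← h.maximalIdeal_eq, IsLocalRing.notMem_maximalIdeal]

theorem pos (h : IsChainRing R γ s q) : 0 < s := by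
  refine Nat.pos_of_ne_zero ?_
  rintro rfl
  simpa using h.pow_eq_zero

theorem gen_pow_eq_zero_iff (h : IsChainRing R γ s q) {n : ℕ} : γ ^ n = 0 ↔ s ≤ n := by
  refine ⟨fun hn ↦ ?_, fun hn ↦ pow_eq_zero_of_le hn h.pow_eq_zero⟩
  by_contra! hlt
  exact h.pow_pred_ne_zero (pow_eq_zero_of_le (Nat.le_sub_one_of_lt hlt) hn)

theorem exists_associated_pow (h : IsChainRing R γ s q) {y : R} (hy : y ≠ 0) :
    ∃ n < s, Associated (γ ^ n) y := by
  have hfin : FiniteMultiplicity γ y :=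
    ⟨s, by rwa [pow_succ, h.pow_eq_zero, zero_mul, zero_dvd_iff]⟩
  obtain ⟨c, hc, hdvd⟩ := hfin.exists_eq_pow_mul_and_not_dvd
  obtain ⟨u, rfl⟩ := h.isUnit_iff.2 hdvd
  refine ⟨multiplicity γ y, ?_, u, hc.symm⟩
  by_contra! hle
  exact hy (by rw [hc, h.gen_pow_eq_zero_iff.2 hle, zero_mul])

theorem dvd_pow_pred (h : IsChainRing R γ s q) {y : R} (hy : y ≠ 0) : y ∣ γ ^ (s - 1) := by
  obtain ⟨n, hn, hassoc⟩ := h.exists_associated_pow hy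
  exact hassoc.symm.dvd.trans (pow_dvd_pow γ (Nat.le_sub_one_of_lt hn))

theorem pow_mul_eq_zero_iff (h : IsChainRing R γ s q) {j : ℕ} (hj : j ≤ s) {y : R} :
    γ ^ j * y = 0 ↔ γ ^ (s - j) ∣ y := by
  constructor
  · intro hy
    rcases eq_or_ne y 0 with rfl | hy0
    · exact dvd_zero _
    obtain ⟨n, -, hassoc⟩ := h.exists_associated_pow hy0
    have hzero : γ ^ (j + n) = 0 := by
      rw [pow_add]
      exact ((hassoc.mul_left (γ ^ j)).eq_zero_iff).2 hy
    have hle : s ≤ j + n := h.gen_pow_eq_zero_iff.1 hzero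
    exact (pow_dvd_pow γ (by lia)).trans hassoc.dvd
  · rintro ⟨c, rfl⟩
    rw [← mul_assoc, ← pow_add, Nat.add_sub_cancel' hj, h.pow_eq_zero, zero_mul]

theorem gen_pow_succ_dvd_mul_gen_pow_iff (h : IsChainRing R γ s q) {n : ℕ} (hn : n < s) {y : R} :
    γ ^ (n + 1) ∣ y * γ ^ n ↔ γ ∣ y := by
  refine ⟨fun hdvd ↦ ?_, fun hdvd ↦ ?_⟩
  · by_contra hy
    have hdvd' : γ ^ (n + 1) ∣ γ ^ n := (h.isUnit_iff.2 hy).dvd_mul_left.1 hdvd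
    have hshift : γ ^ (n + 1) * γ ^ (s - (n + 1)) ∣ γ ^ n * γ ^ (s - (n + 1)) :=
      mul_dvd_mul_right hdvd' _
    rw [← pow_add, ← pow_add, Nat.add_sub_cancel' hn, h.pow_eq_zero, zero_dvd_iff,
      h.gen_pow_eq_zero_iff] at hshift
    lia
  · rw [pow_succ']
    exact mul_dvd_mul_right hdvd _

theorem gen_mul_eq_zero_iff_mem_socle (h : IsChainRing R γ s q) {y : R} :
    γ * y = 0 ↔ y ∈ socle γ s := by
  rw [Ideal.mem_span_singleton, ← h.pow_mul_eq_zero_iff h.pos, pow_one]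

/-- Multiplication by `γ ^ n` identifies `R ⧸ ⟨γ⟩` with the layer `⟨γ ^ n⟩ ⧸ ⟨γ ^ (n + 1)⟩`. -/
theorem card_quotient_span_pow (h : IsChainRing R γ s q) {n : ℕ} (hn : n ≤ s) :
    Nat.card (R ⧸ Ideal.span {γ ^ n}) = q ^ n := by
  induction n with
  | zero => simp
  | succ n ih =>
    let I : Ideal R := Ideal.span {γ ^ (n + 1)}
    have hI : I ≤ Ideal.span {γ ^ n} :=
      Ideal.span_singleton_le_span_singleton.2 (pow_dvd_pow γ n.le_succ)
    have htorsion : Ideal.torsionOf R (R ⧸ I) (I.mkQ (γ ^ n)) = Ideal.span {γ} := by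
      ext y
      rw [Ideal.mem_torsionOf_iff, ← map_smul, Submodule.mkQ_apply, Submodule.Quotient.mk_eq_zero,
        Ideal.mem_span_singleton, Ideal.mem_span_singleton, smul_eq_mul]
      exact h.gen_pow_succ_dvd_mul_gen_pow_iff hn
    have hlayer : Nat.card (Submodule.map I.mkQ (Ideal.span {γ ^ n})) = q := by
      rw [Ideal.span, Submodule.map_span, Set.image_singleton, ← h.card_residue, ← htorsion]
      exact (Nat.card_congr (Ideal.quotTorsionOfEquivSpanSingleton R _ _).toEquiv).symm
    rw [← Submodule.card_quotient_mul_card_quotient _ I hI, hlayer, ih (by lia), pow_succ']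

theorem card_span_pow (h : IsChainRing R γ s q) {j : ℕ} (hj : j ≤ s) :
    Nat.card (Ideal.span {γ ^ j}) = q ^ (s - j) := by
  have htorsion : Ideal.torsionOf R R (γ ^ j) = Ideal.span {γ ^ (s - j)} := by
    ext y
    rw [Ideal.mem_torsionOf_iff, Ideal.mem_span_singleton, smul_eq_mul, mul_comm,
      h.pow_mul_eq_zero_iff hj]
  rw [← h.card_quotient_span_pow (Nat.sub_le s j), ← htorsion]
  exact (Nat.card_congr (Ideal.quotTorsionOfEquivSpanSingleton R R (γ ^ j)).toEquiv).symm

theorem card_socle (h : IsChainRing R γ s q) : Nat.card (socle γ s) = q := by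
  rw [h.card_span_pow (Nat.sub_le s 1), Nat.sub_sub_self h.pos, pow_one]

theorem card_eq (h : IsChainRing R γ s q) : Nat.card R = q ^ s := by
  have htop := h.card_span_pow (Nat.zero_le s)
  rw [pow_zero, Ideal.span_singleton_one, Nat.sub_zero] at htop
  rw [← htop]
  exact (Nat.card_congr Submodule.topEquiv.toEquiv).symm

theorem card_maximalIdeal (h : IsChainRing R γ s q) :
    Nat.card (IsLocalRing.maximalIdeal R) = q ^ (s - 1) := by
  rw [h.maximalIdeal_eq, ← h.card_span_pow h.pos, pow_one]

end Ideals

end IsChainRing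

section LocalRing

variable (R : Type*) [CommRing R] [IsLocalRing R]

theorem card_units_add_card_maximalIdeal [Finite R] :
    Nat.card Rˣ + Nat.card (IsLocalRing.maximalIdeal R) = Nat.card R := by
  classical
  rw [Nat.card_congr (Submonoid.unitsTypeEquivIsUnitSubmonoid (M := R)).toEquiv]
  exact Nat.card_sum.symm.trans (Nat.card_congr (Equiv.sumCompl (IsUnit : R → Prop)))

/-- The submodule `𝔪^ι` of `R^ι` for a local ring `R` with maximal ideal `𝔪`; its complement
consists of the vectors with a unit coordinate. -/
def maximalIdealPi (ι : Type*) : Submodule R (ι → R) :=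
  Submodule.pi Set.univ fun _ ↦ IsLocalRing.maximalIdeal R

variable {R} {ι : Type*}

theorem mem_maximalIdealPi {w : ι → R} :
    w ∈ maximalIdealPi R ι ↔ ∀ i, w i ∈ IsLocalRing.maximalIdeal R := by
  simp [maximalIdealPi]

theorem notMem_maximalIdealPi {w : ι → R} :
    w ∉ maximalIdealPi R ι ↔ ∃ i, IsUnit (w i) := by
  simp only [mem_maximalIdealPi, not_forall, IsLocalRing.notMem_maximalIdeal]

theorem card_maximalIdealPi [Finite ι] :
    Nat.card (maximalIdealPi R ι) =
      Nat.card (IsLocalRing.maximalIdeal R) ^ Nat.card ι := by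
  have e : maximalIdealPi R ι ≃ (ι → IsLocalRing.maximalIdeal R) :=
    (Equiv.subtypeEquivRight fun _ ↦ mem_maximalIdealPi).trans Equiv.subtypePiEquivPi
  rw [Nat.card_congr e, Nat.card_fun]

end LocalRing

namespace IsChainRing

variable {R : Type*} [CommRing R] [IsLocalRing R] {γ : R} {s q : ℕ} {ι : Type*}

theorem card_units [Finite R] (h : IsChainRing R γ s q) : Nat.card Rˣ = (q - 1) * q ^ (s - 1) := by
  have hsum := card_units_add_card_maximalIdeal R
  rw [h.card_maximalIdeal, h.card_eq, ← mul_pow_sub_one h.pos.ne'] at hsum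
  rw [Nat.sub_mul, one_mul, ← hsum, Nat.add_sub_cancel]

theorem mem_maximalIdealPi_iff_exists_smul (h : IsChainRing R γ s q) {w : ι → R} :
    w ∈ maximalIdealPi R ι ↔ ∃ v, w = γ • v := by
  simp only [mem_maximalIdealPi, h.maximalIdeal_eq, Ideal.mem_span_singleton, dvd_def,
    Classical.skolem, funext_iff, Pi.smul_apply, smul_eq_mul]

theorem domRestrict_maximalIdealPi_eq_zero_iff (h : IsChainRing R γ s q) {M : Type*}
    [AddCommGroup M] [Module R M] {f : (ι → R) →ₗ[R] M} :
    f.domRestrict (maximalIdealPi R ι) = 0 ↔ γ • f = 0 := by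
  simp only [LinearMap.ext_iff, LinearMap.domRestrict_apply, LinearMap.smul_apply,
    LinearMap.zero_apply, ← map_smul]
  refine ⟨fun hf v ↦ hf ⟨γ • v, h.mem_maximalIdealPi_iff_exists_smul.2 ⟨v, rfl⟩⟩, ?_⟩
  rintro hf ⟨w, hw⟩
  obtain ⟨v, rfl⟩ := h.mem_maximalIdealPi_iff_exists_smul.1 hw
  exact hf v

end IsChainRing

section HomogeneousWeight

variable {R : Type} [CommRing R]

theorem wHom_zero (γ : R) (s q : ℕ) : wHom γ s q 0 = 0 := if_pos rfl

theorem wHom_of_mem_socle {γ y : R} {s : ℕ} (q : ℕ) (hy : y ∈ IsChainRing.socle γ s)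
    (hy0 : y ≠ 0) : wHom γ s q y = q ^ (s - 1) := by
  rw [wHom, if_neg hy0, if_pos hy]

theorem wHom_of_notMem_socle {γ y : R} {s : ℕ} (q : ℕ) (hy : y ∉ IsChainRing.socle γ s) :
    wHom γ s q y = (q - 1) * q ^ (s - 2) := by
  rw [wHom, if_neg (ne_of_mem_of_not_mem (zero_mem _) hy).symm, if_neg hy]

open Classical in
theorem wHom_units_smul (γ : R) (s q : ℕ) (u : Rˣ) (y : R) :
    wHom γ s q (u • y) = wHom γ s q y := by
  have hmem : u • y ∈ IsChainRing.socle γ s ↔ y ∈ IsChainRing.socle γ s :=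
    Ideal.unit_mul_mem_iff_mem _ u.isUnit
  exact if_congr (smul_eq_zero_iff_eq u) rfl (if_congr hmem rfl rfl)

end HomogeneousWeight

namespace IsChainRing

section Average

variable {R : Type} [CommRing R] [IsLocalRing R] [Finite R] {γ : R} {s q : ℕ}

theorem sum_wHom_socle (h : IsChainRing R γ s q) [Fintype (socle γ s)] :
    ∑ t : socle γ s, wHom γ s q t = Nat.card Rˣ := by
  classical
  calc ∑ t : socle γ s, wHom γ s q t
      = ∑ t ∈ Finset.univ.erase (0 : socle γ s), wHom γ s q t :=
        (Finset.sum_erase _ (f := fun t : socle γ s ↦ wHom γ s q t) (wHom_zero γ s q)).symm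
    _ = ∑ _t ∈ Finset.univ.erase (0 : socle γ s), q ^ (s - 1) :=
        Finset.sum_congr rfl fun t ht ↦
          wHom_of_mem_socle q t.2 (Subtype.coe_ne_coe.2 (Finset.ne_of_mem_erase ht))
    _ = Nat.card Rˣ := by
        rw [Finset.sum_const, Finset.card_erase_of_mem (Finset.mem_univ _), Finset.card_univ,
          ← Nat.card_eq_fintype_card, h.card_socle, smul_eq_mul, h.card_units]

theorem sum_wHom_add_socle (h : IsChainRing R γ s q) [Fintype (socle γ s)] (y : R) :
    ∑ t : socle γ s, wHom γ s q (y + t) = Nat.card Rˣ := by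
  by_cases hy : y ∈ socle γ s
  · rw [← h.sum_wHom_socle]
    exact Equiv.sum_comp (Equiv.addLeft (⟨y, hy⟩ : socle γ s)) fun t ↦ wHom γ s q t
  · have hs : s ≠ 1 := by
      rintro rfl
      exact hy (by simp [socle])
    have hweight (t : socle γ s) : wHom γ s q (y + t) = (q - 1) * q ^ (s - 2) :=
      wHom_of_notMem_socle q (by rwa [Ideal.add_mem_iff_left _ t.2])
    have hpow : q * q ^ (s - 2) = q ^ (s - 1) := by
      rw [← pow_succ', show s - 2 + 1 = s - 1 by have := h.pos; lia]
    simp only [hweight, Finset.sum_const, Finset.card_univ]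
    rw [← Nat.card_eq_fintype_card, h.card_socle, smul_eq_mul, mul_left_comm, hpow,
      h.card_units]

theorem mul_sum_wHom_linearMap (h : IsChainRing R γ s q) {M : Type*} [AddCommGroup M] [Module R M]
    [Fintype M] {f : M →ₗ[R] R} (hf : f ≠ 0) :
    q * ∑ m, wHom γ s q (f m) = Nat.card M * Nat.card Rˣ := by
  have := Fintype.ofFinite (socle γ s)
  obtain ⟨m₀, hm₀⟩ := DFunLike.ne_iff.1 hf
  have hshift (t : socle γ s) : ∑ m, wHom γ s q (f m + t) = ∑ m, wHom γ s q (f m) := by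
    obtain ⟨c, hc⟩ := (h.dvd_pow_pred hm₀).trans (Ideal.mem_span_singleton.1 t.2)
    rw [← Equiv.sum_comp (Equiv.addRight (c • m₀)) fun m ↦ wHom γ s q (f m)]
    simp only [Equiv.coe_addRight, map_add, map_smul, smul_eq_mul, hc, mul_comm]
  calc q * ∑ m, wHom γ s q (f m)
      = ∑ t : socle γ s, ∑ m, wHom γ s q (f m + t) := by
        simp only [hshift, Finset.sum_const, Finset.card_univ]
        rw [← Nat.card_eq_fintype_card, h.card_socle, smul_eq_mul]
    _ = ∑ m, ∑ t : socle γ s, wHom γ s q (f m + t) := Finset.sum_comm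
    _ = Nat.card M * Nat.card Rˣ := by
        simp only [h.sum_wHom_add_socle, Finset.sum_const, Finset.card_univ,
          Nat.card_eq_fintype_card, smul_eq_mul]

end Average

end IsChainRing

namespace IsBetaColumnSet

variable {R : Type} [CommRing R] {k : ℕ} {D : Finset (Fin k → R)}

/-- The bijection `(u, g) ↦ u • g` from units and columns onto the vectors with a unit
coordinate. -/
noncomputable def unitsProdEquiv (hD : IsBetaColumnSet D) :
    Rˣ × D ≃ {w : Fin k → R // ∃ i, IsUnit (w i)} :=
  Equiv.ofBijective
    (fun ug ↦ ⟨ug.1 • ug.2.1, (hD.1 ug.2 ug.2.2).imp fun _ hi ↦ ug.1.isUnit.mul hi⟩) <| by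
    constructor
    · rintro ⟨u, g, hg⟩ ⟨v, g', hg'⟩ heq
      have heq' : u • g = v • g' := congrArg Subtype.val heq
      have hprim : ∃ i, IsUnit ((u • g) i) := (hD.1 g hg).imp fun _ hi ↦ u.isUnit.mul hi
      have huniq := (hD.2 _ hprim).unique (y₁ := (u, g)) (y₂ := (v, g')) ⟨hg, rfl⟩ ⟨hg', heq'⟩
      simpa only [Prod.mk.injEq, Subtype.mk.injEq] using huniq
    · rintro ⟨w, hw⟩
      obtain ⟨⟨u, g⟩, ⟨hg, rfl⟩, -⟩ := hD.2 w hw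
      exact ⟨(u, ⟨g, hg⟩), rfl⟩

theorem card_units_nsmul_sum_add_sum_maximalIdealPi [IsLocalRing R] [Fintype R] {A : Type*}
    [AddCommMonoid A] [Fintype (maximalIdealPi R (Fin k))] (hD : IsBetaColumnSet D)
    {F : (Fin k → R) → A} (hF : ∀ (u : Rˣ) w, F (u • w) = F w) :
    Nat.card Rˣ • ∑ g ∈ D, F g + ∑ w : maximalIdealPi R (Fin k), F w = ∑ w, F w := by
  classical
  have hunits : Nat.card Rˣ • ∑ g ∈ D, F g = ∑ w : {w : Fin k → R // ∃ i, IsUnit (w i)}, F w :=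
    calc Nat.card Rˣ • ∑ g ∈ D, F g = ∑ ug : Rˣ × D, F (ug.1 • ug.2.1) := by
          simp only [hF, Fintype.sum_prod_type, Finset.sum_const, Finset.card_univ,
            Nat.card_eq_fintype_card, Finset.sum_coe_sort D F]
      _ = ∑ w : {w : Fin k → R // ∃ i, IsUnit (w i)}, F w :=
          hD.unitsProdEquiv.sum_comp fun w ↦ F w
  have hcompl : ∑ w : {w : Fin k → R // ∃ i, IsUnit (w i)}, F w =
      ∑ w : {w // w ∉ maximalIdealPi R (Fin k)}, F w :=
    Fintype.sum_equiv (Equiv.subtypeEquivRight fun _ ↦ notMem_maximalIdealPi.symm) _ _ fun _ ↦ rfl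
  rw [hunits, hcompl, add_comm]
  convert Fintype.sum_subtype_add_sum_subtype (· ∈ maximalIdealPi R (Fin k)) F

section Codeword

variable [IsLocalRing R] [Finite R] {γ : R} {s q : ℕ} {f : (Fin k → R) →ₗ[R] R}

theorem mul_card_units_mul_sum_wHom_add [Fintype (maximalIdealPi R (Fin k))]
    (hD : IsBetaColumnSet D) (h : IsChainRing R γ s q) (hf : f ≠ 0) :
    q * (Nat.card Rˣ * ∑ g ∈ D, wHom γ s q (f g) +
        ∑ w : maximalIdealPi R (Fin k), wHom γ s q (f w)) = q ^ (s * k) * Nat.card Rˣ := by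
  have := Fintype.ofFinite R
  have hinv (u : Rˣ) (w : Fin k → R) : wHom γ s q (f (u • w)) = wHom γ s q (f w) := by
    rw [Units.smul_def, map_smul, ← Units.smul_def, wHom_units_smul]
  rw [← smul_eq_mul (Nat.card Rˣ), hD.card_units_nsmul_sum_add_sum_maximalIdealPi hinv,
    h.mul_sum_wHom_linearMap hf, Nat.card_fun, h.card_eq, Nat.card_fin, pow_mul]

theorem mul_sum_wHom_of_smul_eq_zero (hD : IsBetaColumnSet D) (h : IsChainRing R γ s q)
    (hf : f ≠ 0) (hγ : γ • f = 0) : q * ∑ g ∈ D, wHom γ s q (f g) = q ^ (s * k) := by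
  have := Fintype.ofFinite (maximalIdealPi R (Fin k))
  have hvanish (w : maximalIdealPi R (Fin k)) : f w = 0 :=
    LinearMap.congr_fun (h.domRestrict_maximalIdealPi_eq_zero_iff.2 hγ) w
  have hsum := hD.mul_card_units_mul_sum_wHom_add h hf
  simp only [hvanish, wHom_zero, Finset.sum_const_zero, add_zero] at hsum
  apply Nat.eq_of_mul_eq_mul_right (Nat.card_pos (α := Rˣ))
  rw [← hsum]
  ring

theorem mul_sum_wHom_of_smul_ne_zero (hD : IsBetaColumnSet D) (h : IsChainRing R γ s q)
    (hγ : γ • f ≠ 0) :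
    q * ∑ g ∈ D, wHom γ s q (f g) = q ^ ((s - 1) * k) * (q ^ k - 1) := by
  have hf : f ≠ 0 := right_ne_zero_of_smul hγ
  have := Fintype.ofFinite (maximalIdealPi R (Fin k))
  have hcard : Nat.card (maximalIdealPi R (Fin k)) = q ^ ((s - 1) * k) := by
    rw [card_maximalIdealPi, h.card_maximalIdeal, Nat.card_fin, pow_mul]
  have hpi : q * ∑ w : maximalIdealPi R (Fin k), wHom γ s q (f w) =
      q ^ ((s - 1) * k) * Nat.card Rˣ := by
    rw [← hcard]
    exact h.mul_sum_wHom_linearMap (h.domRestrict_maximalIdealPi_eq_zero_iff.not.2 hγ)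
  have hadd : q * ∑ g ∈ D, wHom γ s q (f g) + q ^ ((s - 1) * k) = q ^ (s * k) := by
    apply Nat.eq_of_mul_eq_mul_right (Nat.card_pos (α := Rˣ))
    rw [← hD.mul_card_units_mul_sum_wHom_add h hf, add_mul, ← hpi]
    ring
  have hpow : q ^ ((s - 1) * k) * q ^ k = q ^ (s * k) := by
    rw [← pow_add, ← Nat.succ_mul, Nat.succ_eq_add_one, Nat.sub_add_cancel h.pos]
  rw [Nat.mul_sub_one, hpow]
  exact Nat.eq_sub_of_add_eq hadd

end Codeword

end IsBetaColumnSet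

/-- For `k ≥ 2`, a β-column set `D ⊆ R^k`, and nonzero `x ∈ R^k`: if
`ν(x) = s−1` (i.e. every `x i ∈ ⟨γ^(s−1)⟩`), then the homogeneous weight of the codeword
`(x·g)_{g∈D}` is `q^(sk−1)`; if `ν(x) < s−1` (i.e. some `x i ∉ ⟨γ^(s−1)⟩`), then it is
`q^(sk−k−1)·(q^k − 1)`. -/
theorem stmt_15
    (R : Type) [CommRing R] [IsLocalRing R] [Fintype R]
    (γ : R) (s q : ℕ)
    (hs : 1 ≤ s)
    (hmax : IsLocalRing.maximalIdeal R = Ideal.span {γ})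
    (hnil : γ ^ s = 0)
    (hnil' : 2 ≤ s → γ ^ (s - 1) ≠ 0)
    (hq : Nat.card (R ⧸ Ideal.span ({γ} : Set R)) = q)
    (k : ℕ) (hk : 2 ≤ k)
    (D : Finset (Fin k → R)) (hD : IsBetaColumnSet D)
    (x : Fin k → R) (hx : x ≠ 0) :
    ((∀ i, x i ∈ Ideal.span ({γ ^ (s - 1)} : Set R)) →
      ∑ g ∈ D, wHom γ s q (∑ i, x i * g i) = q ^ (s * k - 1)) ∧
    ((∃ i, x i ∉ Ideal.span ({γ ^ (s - 1)} : Set R)) →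
      ∑ g ∈ D, wHom γ s q (∑ i, x i * g i) = q ^ (s * k - k - 1) * (q ^ k - 1)) := by
  have h : IsChainRing R γ s q := by
    refine ⟨hmax, hnil, ?_, hq⟩
    rcases hs.eq_or_lt with rfl | hs2
    · simp
    · exact hnil' hs2
  have hq0 : 0 < q := hq ▸ Nat.card_pos
  let f : (Fin k → R) →ₗ[R] R := dotProductEquiv R (Fin k) x
  have hf : f ≠ 0 := (dotProductEquiv R (Fin k)).map_ne_zero_iff.2 hx
  have hγ : γ • f = 0 ↔ ∀ i, x i ∈ Ideal.span ({γ ^ (s - 1)} : Set R) := by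
    rw [← map_smul, LinearEquiv.map_eq_zero_iff, funext_iff]
    exact forall_congr' fun i ↦ h.gen_mul_eq_zero_iff_mem_socle
  constructor
  · intro hsocle
    apply Nat.eq_of_mul_eq_mul_left hq0
    rw [mul_pow_sub_one (by positivity)]
    exact hD.mul_sum_wHom_of_smul_eq_zero h hf (hγ.2 hsocle)
  · intro hsocle
    have hs1 : s - 1 ≠ 0 := by
      intro h0
      simp [h0] at hsocle
    have hsum := hD.mul_sum_wHom_of_smul_ne_zero h (hγ.not.2 (not_forall.2 hsocle))
    apply Nat.eq_of_mul_eq_mul_left hq0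
    rwa [← mul_assoc, ← Nat.sub_one_mul, mul_pow_sub_one (by positivity)]
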